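/- Let n ≥ 1, σ > 0, κ > 0, and let μ be the product measure on ℝ^n whose coordinates are independent real Gaussians N(0, σ²). For an n×n real matrix A, define the regularized linearized score-matching criterion L(A) = E_μ[‖(A + σ⁻²·I)x‖²] + κ·Tr(Aᵀ A). Then L(A) = σ²·Tr((A + σ⁻²·I)ᵀ(A + σ⁻²·I)) + κ·Tr(Aᵀ A); moreover, if A = U S Vᵀ is a singular value decomposition of A and K = U + V, then L(A) = (σ² + κ)·Tr(S²) + Tr(S·(Kᵀ K − 2I)) + n/σ². -/

import Mathlib

/-!
The expectation of `‖B x‖²` splits into one term per row of `B`. Each row gives a centered linear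
combination of independent Gaussians, so its second moment is its variance, `σ²` times the sum of
the squares of the row (`integral_row_sq`). Summing over the rows gives `σ² Tr(BᵀB)`
(`integral_norm_sq_mulVec`), which is the first claim with `B = A + σ⁻² I`.

For the second claim, `Tr(BᵀB) = Tr(AᵀA) + 2σ⁻² Tr A + n σ⁻⁴`. Orthogonality turns `Tr(AᵀA)` into
`Tr(S²)`, and `KᵀK - 2I = UᵀV + VᵀU` gives `Tr(S(KᵀK - 2I)) = 2 Tr(U S Vᵀ) = 2 Tr A`.
-/

open MeasureTheory ProbabilityTheory Matrix

lemma integral_row_sq (n : ℕ) (v : NNReal) (b : Fin n → ℝ) :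
    ∫ x : Fin n → ℝ, (∑ j, b j * x j) ^ 2 ∂(Measure.pi fun _ : Fin n => gaussianReal 0 v)
      = v * ∑ j, b j ^ 2 := by
  have hm : ∀ j : Fin n, MemLp (fun y : ℝ => b j * y) 2 (gaussianReal 0 v) := fun j =>
    (memLp_id_gaussianReal' 2 (by simp)).const_mul (b j)
  have h := variance_sum_pi (μ := fun _ : Fin n => gaussianReal 0 v) hm
  have he : (∑ j : Fin n, fun x : Fin n → ℝ => b j * x j) = fun x => ∑ j, b j * x j := by
    ext x; simp
  rw [he, variance_of_integral_eq_zero] at h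
  · rw [h, Finset.mul_sum]
    refine Finset.sum_congr rfl fun j _ => ?_
    rw [variance_const_mul, variance_fun_id_gaussianReal]
    ring
  · exact Measurable.aemeasurable (by fun_prop)
  · rw [integral_finsetSum]
    · refine Finset.sum_eq_zero fun j _ => ?_
      rw [integral_comp_eval (μ := fun _ : Fin n => gaussianReal 0 v) (i := j)
        (f := fun y : ℝ => b j * y) (by fun_prop), integral_const_mul, integral_id_gaussianReal,
        mul_zero]
    · intro j _
      exact integrable_comp_eval (μ := fun _ : Fin n => gaussianReal 0 v) (i := j)
        (f := fun y : ℝ => b j * y) ((hm j).integrable one_le_two)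

lemma integral_norm_sq_mulVec (n : ℕ) (v : NNReal) (B : Matrix (Fin n) (Fin n) ℝ) :
    ∫ x : Fin n → ℝ, ‖(EuclideanSpace.equiv (Fin n) ℝ).symm (B *ᵥ x)‖ ^ 2
        ∂(Measure.pi fun _ : Fin n => gaussianReal 0 v)
      = v * (Bᵀ * B).trace := by
  have h1 : ∀ x : Fin n → ℝ, ‖(EuclideanSpace.equiv (Fin n) ℝ).symm (B *ᵥ x)‖ ^ 2
      = ∑ k, (∑ j, B k j * x j) ^ 2 := by
    intro x
    rw [EuclideanSpace.norm_sq_eq]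
    simp [Matrix.mulVec, dotProduct]
  simp_rw [h1]
  rw [integral_finsetSum]
  · simp_rw [integral_row_sq]
    rw [← Finset.mul_sum, Finset.sum_comm]
    simp [Matrix.trace, Matrix.mul_apply, pow_two]
  · intro k _
    refine MemLp.integrable_sq (memLp_finsetSum _ fun j _ => ?_)
    exact ((memLp_id_gaussianReal' 2 (by simp)).comp_measurePreserving
      (measurePreserving_eval (fun _ : Fin n => gaussianReal 0 v) j)).const_mul (B k j)

lemma trace_transpose_mul_add_smul_one (n : ℕ) (c : ℝ) (A : Matrix (Fin n) (Fin n) ℝ) :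
    ((A + c • (1 : Matrix (Fin n) (Fin n) ℝ))ᵀ * (A + c • (1 : Matrix (Fin n) (Fin n) ℝ))).trace
      = (Aᵀ * A).trace + 2 * c * A.trace + n * c ^ 2 := by
  simp [Matrix.add_mul, Matrix.mul_add, Matrix.trace_add, Matrix.trace_smul]
  ring

/-- **Closed forms of the regularized linearized score-matching criterion.**
For `n ≥ 1`, `σ > 0`, `κ > 0`, `μ = ⨂_{i<n} N(0, σ²)`, and
`L(A) = E_μ[‖(A + σ⁻²·I)x‖²] + κ·Tr(AᵀA)`, one has
`L(A) = σ²·Tr((A + σ⁻²·I)ᵀ(A + σ⁻²·I)) + κ·Tr(AᵀA)`; moreover if `A = U S Vᵀ` is an SVD of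
`A` and `K = U + V`, then `L(A) = (σ² + κ)·Tr(S²) + Tr(S·(KᵀK − 2I)) + n/σ²`. -/
theorem regularized_score_matching_criterion_closed_form
    (n : ℕ) (hn : 1 ≤ n) (σ κ : ℝ) (hσ : 0 < σ) (hκ : 0 < κ)
    (L : Matrix (Fin n) (Fin n) ℝ → ℝ)
    (hL : ∀ A : Matrix (Fin n) (Fin n) ℝ,
      L A = (∫ x : Fin n → ℝ,
          ‖(EuclideanSpace.equiv (Fin n) ℝ).symm
              ((A + (σ ^ 2)⁻¹ • (1 : Matrix (Fin n) (Fin n) ℝ)) *ᵥ x)‖ ^ 2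
          ∂(Measure.pi fun _ : Fin n => gaussianReal 0 ⟨σ ^ 2, sq_nonneg σ⟩))
        + κ * (Aᵀ * A).trace) :
    (∀ A : Matrix (Fin n) (Fin n) ℝ,
      L A = σ ^ 2 * ((A + (σ ^ 2)⁻¹ • (1 : Matrix (Fin n) (Fin n) ℝ))ᵀ
              * (A + (σ ^ 2)⁻¹ • (1 : Matrix (Fin n) (Fin n) ℝ))).trace
            + κ * (Aᵀ * A).trace) ∧
    ∀ A U S V K : Matrix (Fin n) (Fin n) ℝ, ∀ d : Fin n → ℝ,
      Uᵀ * U = 1 → Vᵀ * V = 1 → (∀ i, 0 ≤ d i) → S = Matrix.diagonal d →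
      A = U * S * Vᵀ → K = U + V →
      L A = (σ ^ 2 + κ) * (S * S).trace
            + (S * (Kᵀ * K - 2 • (1 : Matrix (Fin n) (Fin n) ℝ))).trace
            + (n : ℝ) / σ ^ 2 := by
  have first : ∀ A : Matrix (Fin n) (Fin n) ℝ,
      L A = σ ^ 2 * ((A + (σ ^ 2)⁻¹ • (1 : Matrix (Fin n) (Fin n) ℝ))ᵀ
              * (A + (σ ^ 2)⁻¹ • (1 : Matrix (Fin n) (Fin n) ℝ))).trace
            + κ * (Aᵀ * A).trace := by
    intro A
    rw [hL]
    exact congrArg (· + κ * (Aᵀ * A).trace) (integral_norm_sq_mulVec n ⟨σ ^ 2, sq_nonneg σ⟩ _)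
  refine ⟨first, ?_⟩
  intro A U S V K d hU hV _ hS hA hK
  have hSt : Sᵀ = S := by rw [hS, Matrix.diagonal_transpose]
  have hAA : (Aᵀ * A).trace = (S * S).trace := by
    have : Aᵀ * A = V * (S * S * Vᵀ) := by
      rw [hA]
      simp only [Matrix.transpose_mul, Matrix.transpose_transpose, hSt, Matrix.mul_assoc]
      rw [← Matrix.mul_assoc Uᵀ, hU, Matrix.one_mul]
    rw [this, Matrix.trace_mul_comm, Matrix.mul_assoc, hV, Matrix.mul_one]
  have hVU : (S * (Vᵀ * U)).trace = A.trace := by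
    rw [hA, ← Matrix.mul_assoc, Matrix.trace_mul_comm, Matrix.mul_assoc]
  have hUV : (S * (Uᵀ * V)).trace = A.trace := by
    rw [← hVU, ← Matrix.trace_transpose, Matrix.transpose_mul, Matrix.transpose_mul,
      Matrix.transpose_transpose, hSt, Matrix.trace_mul_comm]
  have hKK : Kᵀ * K - 2 • (1 : Matrix (Fin n) (Fin n) ℝ) = Uᵀ * V + Vᵀ * U := by
    rw [hK, Matrix.transpose_add, Matrix.add_mul, Matrix.mul_add, Matrix.mul_add, hU, hV]
    abel
  rw [first, trace_transpose_mul_add_smul_one, hAA, hKK, Matrix.mul_add, Matrix.trace_add,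
    hUV, hVU]
  field_simp
  ring
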